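/- arXiv:2509.21547 — 4 statements merged into one kernel-verified Lean document; each statement's English description precedes it below -/
import Mathlib

section
/- Let S = S_1 ∪ ⋯ ∪ S_T be an i.i.d. sample of size n split into T non-overlapping subsamples, and let U^train_t = ∪_{s=1}^t S_s. Let π_0*, π_1*, …, π_T* be a sequence of distributions on H, where π_t* may depend on U^train_t but not on the rest of the data, and let γ_2, …, γ_T be coefficients where γ_t may depend on U^train_{t−1} but not on the rest of the data. For t ∈ {1,…,T} let P_t be a set of distributions on H that may depend on U^train_t. Let δ ∈ (0,1). Suppose there is a function B_1(π_1) with P[∃ π_1 ∈ P_1 : E_{π_1}[L(h)] ≥ B_1(π_1)] ≤ δ/T, and for each t ≥ 2 a function E_t(π_t, γ_t) with P[∃ π_t ∈ P_t : E_{π_t}[L(h) − γ_t E_{π_{t−1}*}[L(h')]] ≥ E_t(π_t, γ_t)] ≤ δ/T. Define recursively B_t(π_t) = E_t(π_t, γ_t) + γ_t B_{t−1}(π_{t−1}*). Then P[∃ t ∈ {1,…,T} and π_t ∈ P_t : E_{π_t}[L(h)] ≥ B_t(π_t)] ≤ δ. -/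
open MeasureTheory ProbabilityTheory

/-- **Recursive Bound (Recursive PAC-Bayes shell).** Let `S = S_1 ∪ ⋯ ∪ S_T` be an
i.i.d. sample of size `n` split into `T` non-overlapping subsamples (here `chunk`
assigns each sample point to a subsample, and `U^train_t = ∪_{s≤t} S_s` corresponds to
indices `i` with `chunk i < t`). Let `π_0*, …, π_T*` be distributions on `H` where
`π_t*` may depend on `U^train_t` only, let `γ_2, …, γ_T` be coefficients where `γ_t`
may depend on `U^train_{t-1}` only, and for each `t` let `Ps_t` be a set of
(sample-dependent) distributions on `H` depending on `U^train_t` only, with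
`π_t* ∈ Ps_t`. Suppose `P[∃ π_1 ∈ Ps_1 : E_{π_1}[L(h)] ≥ B_1(π_1)] ≤ δ/T` and, for
`t ≥ 2`, `P[∃ π_t ∈ Ps_t : E_{π_t}[L(h)] - γ_t E_{π_{t-1}*}[L(h')] ≥ E_t(π_t, γ_t)]
≤ δ/T`. Define recursively `B_t(π_t) = E_t(π_t, γ_t) + γ_t B_{t-1}(π_{t-1}*)`. Then
`P[∃ t ∈ {1,…,T}, ∃ π_t ∈ Ps_t : E_{π_t}[L(h)] ≥ B_t(π_t)] ≤ δ`. -/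
theorem recursive_pac_bayes_bound
    {Ω 𝒵 H : Type*} [MeasurableSpace Ω] [MeasurableSpace 𝒵] [MeasurableSpace H]
    (μ : Measure Ω) [IsProbabilityMeasure μ]
    (D : Measure 𝒵) [IsProbabilityMeasure D]
    (n : ℕ) (hn : 0 < n)
    (Z : Fin n → Ω → 𝒵) (hZmeas : ∀ i, Measurable (Z i))
    (hindep : iIndepFun Z μ)
    (hid : ∀ i, μ.map (Z i) = D)
    (ℓ : H → 𝒵 → ℝ) (hℓmeas : ∀ h, Measurable (ℓ h))
    (hℓint : ∀ h, Integrable (ℓ h) D)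
    (T : ℕ) (hT : 1 ≤ T)
    (chunk : Fin n → Fin T)
    (πstar : ℕ → Ω → Measure H)
    (hπstarProb : ∀ t ≤ T, ∀ ω, IsProbabilityMeasure (πstar t ω))
    -- `π_t*` depends on the data only through `U^train_t = ∪_{s ≤ t} S_s`
    (hπstarDep : ∀ t ≤ T, ∃ g : ({i : Fin n // (chunk i : ℕ) < t} → 𝒵) → Measure H,
      ∀ ω, πstar t ω = g fun i => Z i.1 ω)
    (γ : ℕ → Ω → ℝ)
    (hγRange : ∀ t, 2 ≤ t → t ≤ T → ∀ ω, γ t ω ∈ Set.Icc (0 : ℝ) 1)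
    -- `γ_t` depends on the data only through `U^train_{t-1}`
    (hγDep : ∀ t, 2 ≤ t → t ≤ T →
      ∃ g : ({i : Fin n // (chunk i : ℕ) < t - 1} → 𝒵) → ℝ,
      ∀ ω, γ t ω = g fun i => Z i.1 ω)
    (Ps : ℕ → Set (Ω → Measure H))
    (hPsProb : ∀ t, 1 ≤ t → t ≤ T → ∀ ρ ∈ Ps t, ∀ ω, IsProbabilityMeasure (ρ ω))
    -- members of `Ps_t` depend on the data only through `U^train_t`
    (hPsDep : ∀ t, 1 ≤ t → t ≤ T → ∀ ρ ∈ Ps t,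
      ∃ g : ({i : Fin n // (chunk i : ℕ) < t} → 𝒵) → Measure H,
      ∀ ω, ρ ω = g fun i => Z i.1 ω)
    (hπstarMem : ∀ t, 1 ≤ t → t ≤ T → πstar t ∈ Ps t)
    (δ : ℝ) (hδ : δ ∈ Set.Ioo (0 : ℝ) 1)
    (B1 : Measure H → Ω → ℝ) (Et : ℕ → Measure H → ℝ → Ω → ℝ)
    (hbase : μ {ω | ∃ ρ ∈ Ps 1, (∫ h, ∫ z, ℓ h z ∂D ∂(ρ ω)) ≥ B1 (ρ ω) ω} ≤
      ENNReal.ofReal (δ / T))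
    (hstep : ∀ t, 2 ≤ t → t ≤ T →
      μ {ω | ∃ ρ ∈ Ps t,
          (∫ h, ∫ z, ℓ h z ∂D ∂(ρ ω))
            - γ t ω * (∫ h, ∫ z, ℓ h z ∂D ∂(πstar (t - 1) ω)) ≥
          Et t (ρ ω) (γ t ω) ω} ≤ ENNReal.ofReal (δ / T))
    (B : ℕ → Measure H → Ω → ℝ)
    (hB1 : ∀ π ω, B 1 π ω = B1 π ω)
    (hBrec : ∀ t, 2 ≤ t → t ≤ T → ∀ π ω,
      B t π ω = Et t π (γ t ω) ω + γ t ω * B (t - 1) (πstar (t - 1) ω) ω) :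
    μ {ω | ∃ t, 1 ≤ t ∧ t ≤ T ∧ ∃ ρ ∈ Ps t,
        (∫ h, ∫ z, ℓ h z ∂D ∂(ρ ω)) ≥ B t (ρ ω) ω} ≤ ENNReal.ofReal δ := by
  classical
  set Lo : Measure H → ℝ := fun ν => ∫ h, ∫ z, ℓ h z ∂D ∂ν with hLo
  let A : ℕ → Set Ω := fun t =>
    if t = 1 then {ω | ∃ ρ ∈ Ps 1, Lo (ρ ω) ≥ B1 (ρ ω) ω}
    else {ω | ∃ ρ ∈ Ps t, Lo (ρ ω) - γ t ω * Lo (πstar (t - 1) ω) ≥ Et t (ρ ω) (γ t ω) ω}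
  have hA : ∀ t ∈ Finset.Icc 1 T, μ (A t) ≤ ENNReal.ofReal (δ / T) := by
    intro t ht
    rw [Finset.mem_Icc] at ht
    by_cases h1 : t = 1
    · simp only [A, if_pos h1]
      exact hbase
    · simp only [A, if_neg h1]
      exact hstep t (by omega) ht.2
  have hgood : ∀ ω, (∀ t ∈ Finset.Icc 1 T, ω ∉ A t) →
      ∀ t, 1 ≤ t → t ≤ T → ∀ ρ ∈ Ps t, Lo (ρ ω) < B t (ρ ω) ω := by
    intro ω hω t ht
    induction t, ht using Nat.le_induction with
    | base =>
      intro h1T ρ hρ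
      by_contra hcon
      refine hω 1 (Finset.mem_Icc.2 ⟨le_rfl, h1T⟩) ?_
      simp only [A, if_true]
      refine ⟨ρ, hρ, ?_⟩
      rw [hB1] at hcon
      exact not_lt.1 hcon
    | succ t ht ih =>
      intro htT ρ hρ
      have h2 := ih (by omega) (πstar t) (hπstarMem t ht (by omega))
      have h3 : Lo (ρ ω) - γ (t + 1) ω * Lo (πstar t ω)
          < Et (t + 1) (ρ ω) (γ (t + 1) ω) ω := by
        by_contra hcon
        refine hω (t + 1) (Finset.mem_Icc.2 ⟨by omega, htT⟩) ?_
        have hne : t + 1 ≠ 1 := by omega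
        simp only [A, if_neg hne]
        exact ⟨ρ, hρ, not_lt.1 hcon⟩
      have hg := (hγRange (t + 1) (by omega) htT ω).1
      have h4 := mul_le_mul_of_nonneg_left h2.le hg
      rw [hBrec (t + 1) (by omega) htT]
      simp only [Nat.add_sub_cancel]
      linarith
  have hsub : {ω | ∃ t, 1 ≤ t ∧ t ≤ T ∧ ∃ ρ ∈ Ps t, Lo (ρ ω) ≥ B t (ρ ω) ω} ⊆
      ⋃ t ∈ Finset.Icc 1 T, A t := by
    rintro ω ⟨t, h1, h2, ρ, hρ, hge⟩
    by_contra hcon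
    simp only [Set.mem_iUnion, not_exists] at hcon
    exact absurd (hgood ω hcon t h1 h2 ρ hρ) (not_lt.2 hge)
  have hT0 : (T : ℝ) ≠ 0 := by
    have : T ≠ 0 := by omega
    exact_mod_cast this
  calc _ ≤ μ (⋃ t ∈ Finset.Icc 1 T, A t) := measure_mono hsub
    _ ≤ ∑ t ∈ Finset.Icc 1 T, μ (A t) := measure_biUnion_finset_le _ _
    _ ≤ ∑ t ∈ Finset.Icc 1 T, ENNReal.ofReal (δ / T) := Finset.sum_le_sum hA
    _ = ENNReal.ofReal δ := by
      rw [Finset.sum_const, Nat.card_Icc, Nat.add_sub_cancel, nsmul_eq_mul,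
        ← ENNReal.ofReal_natCast, ← ENNReal.ofReal_mul (Nat.cast_nonneg T),
        mul_div_cancel₀ _ hT0]
end

section
/- Let Z be a real-valued random variable with Z ≤ 1 almost surely. Then for any λ ∈ [0, 1/2], E[exp(−λZ − λ²Z²)] ≤ exp(−λ E[Z]). -/
open MeasureTheory

theorem aux_exp_le (x : ℝ) (hx : -(1/2) ≤ x) : Real.exp (x - x ^ 2) ≤ 1 + x := by
  rcases le_total 0 x with h | h
  · rw [← Real.le_log_iff_exp_le (by linarith)]
    refine le_trans ?_ (Real.le_log_one_add_of_nonneg h)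
    rw [le_div_iff₀ (by linarith)]
    nlinarith [pow_nonneg h 2, pow_nonneg h 3]
  · obtain ⟨y, rfl⟩ : ∃ y, x = -y := ⟨-x, by ring⟩
    have hy : 0 ≤ y := by linarith
    have hy2 : y ≤ 1/2 := by linarith
    have e : -y - (-y) ^ 2 = -(y + y ^ 2) := by ring
    rw [e, Real.exp_neg]
    have q := Real.quadratic_le_exp_of_nonneg (x := y + y ^ 2) (by positivity)
    rw [inv_le_iff_one_le_mul₀ (Real.exp_pos _)]
    have h1 : y ^ 2 ≤ 1/4 := by nlinarith
    have h2 : y ^ 3 ≤ 1/8 := by nlinarith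
    have k : 0 ≤ y ^ 2 / 2 * (1 - y - y ^ 2 - y ^ 3) :=
      mul_nonneg (by positivity) (by linarith)
    have := mul_le_mul_of_nonneg_left q (by linarith : 0 ≤ 1 + -y)
    nlinarith

/-- Let `Z ≤ 1` almost surely. Then for any `λ ∈ [0, 1/2]`,
`E[exp(-λZ - λ²Z²)] ≤ exp(-λ E[Z])`. -/
theorem unexpected_bernstein_mgf
    {Ω : Type*} [MeasurableSpace Ω] (μ : Measure Ω) [IsProbabilityMeasure μ]
    (Z : Ω → ℝ) (hZmeas : Measurable Z) (hZle : ∀ᵐ ω ∂μ, Z ω ≤ 1)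
    (lam : ℝ) (hlam : lam ∈ Set.Icc (0 : ℝ) (1/2))
    (hZint : Integrable Z μ)
    (hexpint : Integrable (fun ω => Real.exp (-lam * Z ω - lam ^ 2 * Z ω ^ 2)) μ) :
    ∫ ω, Real.exp (-lam * Z ω - lam ^ 2 * Z ω ^ 2) ∂μ ≤
      Real.exp (-lam * ∫ ω, Z ω ∂μ) := by
  obtain ⟨h0, h1⟩ := hlam
  have hI : Integrable (fun ω => 1 + -lam * Z ω) μ :=
    (integrable_const 1).add (hZint.const_mul (-lam))
  have key : ∫ ω, Real.exp (-lam * Z ω - lam ^ 2 * Z ω ^ 2) ∂μ ≤ ∫ ω, (1 + -lam * Z ω) ∂μ := by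
    refine integral_mono_ae hexpint hI ?_
    filter_upwards [hZle] with ω hω
    have := aux_exp_le (-lam * Z ω) (by nlinarith)
    have e : (-lam * Z ω) ^ 2 = lam ^ 2 * Z ω ^ 2 := by ring
    rwa [e] at this
  refine key.trans ?_
  rw [integral_add (integrable_const 1) (hZint.const_mul (-lam)), integral_const_mul]
  simp only [integral_const, probReal_univ, smul_eq_mul, mul_one]
  linarith [Real.add_one_le_exp (-lam * ∫ ω, Z ω ∂μ)]
end

section
/- Let Z be a real-valued random variable with Z ≤ 1 almost surely. Then for any λ ∈ [0, 1/2], E[exp(λ(E[Z] − Z) − λ²Z²)] ≤ 1. -/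
open MeasureTheory

theorem aux_exp_le_s6 (y : ℝ) (hy : y ≤ 1/2) : Real.exp (-y - y^2) ≤ 1 - y := by
  have key : 1 ≤ Real.exp (y + y^2) * (1 - y) := by
    rcases le_total 0 y with h | h
    · have h1 := Real.quadratic_le_exp_of_nonneg (x := y + y^2) (by positivity)
      have h2 := mul_le_mul_of_nonneg_right h1 (by linarith : 0 ≤ 1 - y)
      have h3 : 0 ≤ 1 - y - y^2 - y^3 := by
        have a : y^2 ≤ 1/4 := by nlinarith
        have b : y^3 ≤ 1/8 := by nlinarith
        linarith
      have h4 : 0 ≤ y^2 * (1 - y - y^2 - y^3) := by positivity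
      nlinarith
    · have h1 := Real.add_one_le_exp (y + y^2)
      have h2 := mul_le_mul_of_nonneg_right h1 (by linarith : 0 ≤ 1 - y)
      have h3 : 0 ≤ y^2 * (-y) := mul_nonneg (sq_nonneg y) (by linarith)
      nlinarith
  have e : -y - y^2 = -(y + y^2) := by ring
  rw [e, Real.exp_neg, inv_le_iff_one_le_mul₀ (Real.exp_pos _)]
  linarith

/-- Let `Z ≤ 1` almost surely. Then for any `λ ∈ [0, 1/2]`,
`E[exp(λ(E[Z] - Z) - λ²Z²)] ≤ 1`. -/
theorem unexpected_bernstein_centered_mgf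
    {Ω : Type*} [MeasurableSpace Ω] (μ : Measure Ω) [IsProbabilityMeasure μ]
    (Z : Ω → ℝ) (hZmeas : Measurable Z) (hZle : ∀ᵐ ω ∂μ, Z ω ≤ 1)
    (lam : ℝ) (hlam : lam ∈ Set.Icc (0 : ℝ) (1/2))
    (hZint : Integrable Z μ)
    (hexpint : Integrable
      (fun ω => Real.exp (lam * ((∫ ω', Z ω' ∂μ) - Z ω) - lam ^ 2 * Z ω ^ 2)) μ) :
    ∫ ω, Real.exp (lam * ((∫ ω', Z ω' ∂μ) - Z ω) - lam ^ 2 * Z ω ^ 2) ∂μ ≤ 1 := by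
  obtain ⟨h0, h1⟩ := hlam
  set m := ∫ ω', Z ω' ∂μ with hm
  have hint : Integrable (fun ω => Real.exp (lam * m) * (1 - lam * Z ω)) μ :=
    ((integrable_const (1:ℝ)).sub (hZint.const_mul lam)).const_mul _
  calc ∫ ω, Real.exp (lam * (m - Z ω) - lam ^ 2 * Z ω ^ 2) ∂μ
      ≤ ∫ ω, Real.exp (lam * m) * (1 - lam * Z ω) ∂μ := by
        apply integral_mono_ae hexpint hint
        filter_upwards [hZle] with ω hω
        have h := aux_exp_le_s6 (lam * Z ω) (by nlinarith)
        have e : lam * (m - Z ω) - lam ^ 2 * Z ω ^ 2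
            = lam * m + (-(lam * Z ω) - (lam * Z ω)^2) := by ring
        simp only [e, Real.exp_add]
        exact mul_le_mul_of_nonneg_left h (Real.exp_pos _).le
    _ = Real.exp (lam * m) * (1 - lam * m) := by
        rw [integral_const_mul, integral_sub (integrable_const _) (hZint.const_mul lam),
          integral_const_mul]
        simp [hm]
    _ ≤ Real.exp (lam * m) * Real.exp (-(lam * m)) := by
        apply mul_le_mul_of_nonneg_left _ (Real.exp_pos _).le
        linarith [Real.add_one_le_exp (-(lam * m))]
    _ = 1 := by rw [← Real.exp_add]; simp
end

section
/- Let Z_1, …, Z_n be independent real-valued random variables, each bounded above by 1 almost surely. Then for any λ ∈ (0, 1/2] and δ ∈ (0,1), the probability that (1/n) Σ_{i=1}^n E[Z_i] ≥ (1/n) Σ_{i=1}^n Z_i + (λ/n) Σ_{i=1}^n Z_i² + ln(1/δ)/(λn) is at most δ. -/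
open MeasureTheory ProbabilityTheory

lemma ub_aux (x : ℝ) (hx : x ≤ 1/2) : Real.exp (-x - x^2) ≤ 1 - x := by
  have key : 1 ≤ (1 - x) * Real.exp (x + x^2) := by
    rcases le_total 0 x with h | h
    · have h1 := Real.quadratic_le_exp_of_nonneg (x := x + x^2) (by positivity)
      have h2 : (1 - x) * (1 + (x + x^2) + (x+x^2)^2/2) ≤ (1 - x) * Real.exp (x + x^2) :=
        mul_le_mul_of_nonneg_left h1 (by linarith)
      refine le_trans ?_ h2
      have h3 : (1 - x) * (1 + (x + x^2) + (x+x^2)^2/2) = 1 + x^2/2 * (1 - x - x^2 - x^3) := by ring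
      have h4 : x^2 ≤ 1/4 := by nlinarith
      have h5 : x^3 ≤ 1/8 := by nlinarith
      have h6 : 0 ≤ x^2/2 * (1 - x - x^2 - x^3) := mul_nonneg (by positivity) (by linarith)
      linarith
    · have h1 := Real.add_one_le_exp (x + x^2)
      have h2 : (1 - x) * (x + x^2 + 1) ≤ (1 - x) * Real.exp (x + x^2) :=
        mul_le_mul_of_nonneg_left h1 (by linarith)
      refine le_trans ?_ h2
      nlinarith [mul_nonneg (neg_nonneg.2 h) (sq_nonneg x)]
  have e : Real.exp (-x - x^2) = (Real.exp (x + x^2))⁻¹ := by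
    rw [← Real.exp_neg]; congr 1; ring
  rw [e, inv_le_iff_one_le_mul₀ (Real.exp_pos _)]
  exact key

/-- Let `Z_1, …, Z_n` be independent random variables, each bounded above by 1 almost
surely. Then for any `λ ∈ (0, 1/2]` and `δ ∈ (0,1)`, with probability at most `δ`,
`(1/n) Σᵢ E[Zᵢ] ≥ (1/n) Σᵢ Zᵢ + (λ/n) Σᵢ Zᵢ² + ln(1/δ)/(λn)`. -/
theorem unexpected_bernstein_fixed_lambda
    {Ω : Type*} [MeasurableSpace Ω] (μ : Measure Ω) [IsProbabilityMeasure μ]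
    (n : ℕ) (hn : 0 < n) (Z : Fin n → Ω → ℝ)
    (hZmeas : ∀ i, Measurable (Z i))
    (hindep : iIndepFun Z μ)
    (hZle : ∀ i, ∀ᵐ ω ∂μ, Z i ω ≤ 1)
    (hZint : ∀ i, Integrable (Z i) μ)
    (lam : ℝ) (hlam : lam ∈ Set.Ioc (0 : ℝ) (1/2))
    (δ : ℝ) (hδ : δ ∈ Set.Ioo (0 : ℝ) 1) :
    μ {ω | (n : ℝ)⁻¹ * ∑ i, (∫ ω', Z i ω' ∂μ) ≥
        (n : ℝ)⁻¹ * ∑ i, Z i ω + lam / n * ∑ i, Z i ω ^ 2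
          + Real.log (1 / δ) / (lam * n)} ≤ ENNReal.ofReal δ := by
  obtain ⟨hl0, hl1⟩ := hlam
  obtain ⟨hd0, hd1⟩ := hδ
  set X : Fin n → Ω → ℝ := fun i ω =>
    lam * (∫ ω', Z i ω' ∂μ) + (-(lam * Z i ω) - (lam * Z i ω)^2) with hX
  have hXmeas : ∀ i, Measurable (X i) := fun i => by
    have := hZmeas i
    simp only [hX]; fun_prop
  have hXind : iIndepFun X μ :=
    hindep.comp (fun i z => lam * (∫ ω', Z i ω' ∂μ) + (-(lam * z) - (lam * z)^2))
      (fun i => by fun_prop)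
  have hint : ∀ i, Integrable (fun ω => Real.exp (-(lam * Z i ω) - (lam * Z i ω)^2)) μ := by
    intro i
    have hm := hZmeas i
    refine Integrable.of_bound (C := Real.exp (1/4)) (by fun_prop) (ae_of_all _ fun ω => ?_)
    rw [Real.norm_eq_abs, abs_of_pos (Real.exp_pos _), Real.exp_le_exp]
    nlinarith [sq_nonneg (lam * Z i ω + 1/2)]
  have hXint : ∀ i, Integrable (fun ω => Real.exp (1 * X i ω)) μ := by
    intro i
    simp only [hX, one_mul, Real.exp_add]
    exact (hint i).const_mul _
  have hmgf : ∀ i, mgf (X i) μ 1 ≤ 1 := by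
    intro i
    simp only [mgf, hX, one_mul, Real.exp_add]
    rw [integral_const_mul]
    have h1 : ∫ ω, Real.exp (-(lam * Z i ω) - (lam * Z i ω)^2) ∂μ
        ≤ ∫ ω, (1 - lam * Z i ω) ∂μ := by
      refine integral_mono_ae (hint i)
        ((integrable_const _).sub ((hZint i).const_mul _)) ?_
      filter_upwards [hZle i] with ω hω
      exact ub_aux _ (by nlinarith)
    rw [integral_sub (integrable_const _) ((hZint i).const_mul _), integral_const_mul] at h1
    simp only [integral_const, probReal_univ, smul_eq_mul, mul_one] at h1
    have h2 := Real.add_one_le_exp (-(lam * ∫ ω, Z i ω ∂μ))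
    calc _ ≤ Real.exp (lam * ∫ ω, Z i ω ∂μ) * Real.exp (-(lam * ∫ ω, Z i ω ∂μ)) :=
          mul_le_mul_of_nonneg_left (by linarith) (Real.exp_pos _).le
      _ = 1 := by rw [← Real.exp_add]; simp
  have hsum : mgf (∑ i, X i) μ 1 ≤ 1 := by
    rw [hXind.mgf_sum hXmeas]
    exact Finset.prod_le_one (fun i _ => mgf_nonneg) (fun i _ => hmgf i)
  have hsi : Integrable (fun ω => Real.exp (1 * (∑ i, X i) ω)) μ :=
    hXind.integrable_exp_mul_sum hXmeas (fun i _ => hXint i)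
  have hch := measure_ge_le_exp_mul_mgf (μ := μ) (X := ∑ i, X i) (Real.log (1/δ))
    zero_le_one hsi
  have he : Real.exp (-1 * Real.log (1/δ)) = δ := by
    rw [one_div, Real.log_inv, neg_one_mul, neg_neg, Real.exp_log hd0]
  rw [he] at hch
  have hfin : μ.real {ω | Real.log (1/δ) ≤ (∑ i, X i) ω} ≤ δ := by nlinarith
  refine le_trans (measure_mono ?_)
    ((ENNReal.le_ofReal_iff_toReal_le (measure_ne_top _ _) hd0.le).2 hfin)
  intro ω hω
  simp only [Set.mem_setOf_eq, ge_iff_le] at hω ⊢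
  have hn' : (0:ℝ) < n := by exact_mod_cast hn
  have h3 := mul_le_mul_of_nonneg_left hω (mul_pos hl0 hn').le
  have e1 : lam * n * ((n : ℝ)⁻¹ * ∑ i, Z i ω + lam / n * ∑ i, Z i ω ^ 2
          + Real.log (1 / δ) / (lam * n)) = lam * ∑ i, Z i ω + lam^2 * ∑ i, Z i ω ^ 2
          + Real.log (1/δ) := by
    field_simp
  have e2 : lam * n * ((n : ℝ)⁻¹ * ∑ i, (∫ ω', Z i ω' ∂μ)) = lam * ∑ i, (∫ ω', Z i ω' ∂μ) := by
    field_simp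
  rw [e1, e2] at h3
  have e3 : (∑ i, X i) ω = lam * ∑ i, (∫ ω', Z i ω' ∂μ) - lam * ∑ i, Z i ω
      - lam^2 * ∑ i, Z i ω ^ 2 := by
    simp only [Finset.sum_apply, hX, Finset.mul_sum, ← Finset.sum_sub_distrib]
    exact Finset.sum_congr rfl fun i _ => by ring
  rw [e3]; linarith
end
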